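/- Let R(t,s) be twice continuously differentiable in s on [−t/2, t/2], for fixed 0 < t ≤ 1, with |∂_s^j R(t,s)| ≤ C (t/2 − |s|)^{3−j} for j = 0,1,2,3 and ∂_s^j R(t, ±t/2) = 0 for j = 0,1,2. Then for every λ ≥ 1, |∫_{−t/2}^{t/2} e^{2iλs} (cosh t − cosh 2s)^{−1/2} R(t,s) ds| ≤ C' λ^{−3}, with C' independent of t ∈ (0,1] and λ. -/

import Mathlib

/-!
Put `r = t / 2` and `d = r - |s|`. On `(-r, r)` both the weight `(cosh t - cosh 2s)^(-1/2)` and `R`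
lose at most a factor `1 / d` with each derivative, uniformly for `t` in a bounded interval, and the
weight is at most `(r² - s²)^(-1/2)`. Hence the `j`-th derivative of the amplitude is
`O(d^(n - j) (r² - s²)^(-1/2))`: for `j < n` it tends to `0` at the endpoints, so that `n`
integrations by parts produce no boundary terms, and for `j = n` it is dominated by the arcsine
density, whose integral is `π` for every `r`. This is what makes the constant independent of `t`.
-/

open MeasureTheory Set Filter Topology
open scoped Nat

variable {E : Type*} [NormedAddCommGroup E] [NormedSpace ℝ E]

/-- Symbol estimates on `S`: `f` is of class `C^n` and of size `ρ`, and each of its first `n`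
derivatives costs at most a factor `1 / δ`. The bounds are multiplied out by the powers of `δ`, so
that they involve no division. -/
structure IsSymbolOn (n : ℕ) (S : Set ℝ) (δ ρ : ℝ → ℝ) (f : ℝ → E) : Prop where
  contDiffOn : ContDiffOn ℝ n f S
  norm_iteratedDeriv_mul_pow_le : ∀ k ≤ n, ∀ s ∈ S, ‖iteratedDeriv k f s‖ * δ s ^ k ≤ ρ s

namespace IsSymbolOn

variable {n : ℕ} {S : Set ℝ} {δ ρ₁ ρ₂ : ℝ → ℝ} {f : ℝ → E}

lemma mono (hf : IsSymbolOn n S δ ρ₁ f) (hρ : ∀ s ∈ S, ρ₁ s ≤ ρ₂ s) : IsSymbolOn n S δ ρ₂ f :=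
  ⟨hf.contDiffOn, fun k hk s hs ↦ (hf.norm_iteratedDeriv_mul_pow_le k hk s hs).trans (hρ s hs)⟩

end IsSymbolOn

lemma norm_iteratedFDerivWithin_eq_norm_iteratedDeriv {S : Set ℝ} (hS : IsOpen S) {f : ℝ → E}
    (k : ℕ) {s : ℝ} (hs : s ∈ S) :
    ‖iteratedFDerivWithin ℝ k f S s‖ = ‖iteratedDeriv k f s‖ := by
  rw [norm_iteratedFDerivWithin_eq_norm_iteratedDerivWithin, iteratedDerivWithin_of_isOpen hS hs]

namespace IsSymbolOn

variable {n : ℕ} {S : Set ℝ} {δ ρ₁ ρ₂ : ℝ → ℝ}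

lemma smul (hS : IsOpen S) (hδ : ∀ s ∈ S, 0 ≤ δ s) {f : ℝ → ℝ} {g : ℝ → E}
    (hf : IsSymbolOn n S δ ρ₁ f) (hg : IsSymbolOn n S δ ρ₂ g) :
    IsSymbolOn n S δ (fun s ↦ 2 ^ n * (ρ₁ s * ρ₂ s)) (fun s ↦ f s • g s) := by
  refine ⟨hf.contDiffOn.smul hg.contDiffOn, fun k hk s hs ↦ ?_⟩
  have hδs := hδ s hs
  have hf' := fun i hi ↦ hf.norm_iteratedDeriv_mul_pow_le i hi s hs
  have hg' := fun i hi ↦ hg.norm_iteratedDeriv_mul_pow_le i hi s hs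
  have hρ₁ : 0 ≤ ρ₁ s := le_trans (by positivity) (hf' 0 n.zero_le)
  have hρ₂ : 0 ≤ ρ₂ s := le_trans (by positivity) (hg' 0 n.zero_le)
  have leibniz := norm_iteratedFDerivWithin_smul_le hf.contDiffOn hg.contDiffOn hS.uniqueDiffOn hs
    (Nat.cast_le.mpr hk)
  simp only [norm_iteratedFDerivWithin_eq_norm_iteratedDeriv hS _ hs] at leibniz
  calc ‖iteratedDeriv k (fun s ↦ f s • g s) s‖ * δ s ^ k
      ≤ (∑ i ∈ Finset.range (k + 1),
          k.choose i * ‖iteratedDeriv i f s‖ * ‖iteratedDeriv (k - i) g s‖) * δ s ^ k := by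
        gcongr
    _ = ∑ i ∈ Finset.range (k + 1), k.choose i *
          ((‖iteratedDeriv i f s‖ * δ s ^ i) * (‖iteratedDeriv (k - i) g s‖ * δ s ^ (k - i))) := by
        rw [Finset.sum_mul]
        refine Finset.sum_congr rfl fun i hi ↦ ?_
        rw [← pow_mul_pow_sub (δ s) (Finset.mem_range_succ_iff.mp hi)]
        ring
    _ ≤ ∑ i ∈ Finset.range (k + 1), k.choose i * (ρ₁ s * ρ₂ s) := by
        gcongr with i hi
        · exact hf' i ((Finset.mem_range_succ_iff.mp hi).trans hk)
        · exact hg' _ ((Nat.sub_le _ _).trans hk)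
    _ = 2 ^ k * (ρ₁ s * ρ₂ s) := by
        rw [← Finset.sum_mul]
        exact_mod_cast congrArg (fun m : ℕ ↦ (m : ℝ) * (ρ₁ s * ρ₂ s)) (Nat.sum_range_choose k)
    _ ≤ 2 ^ n * (ρ₁ s * ρ₂ s) := by gcongr; norm_num

end IsSymbolOn

lemma abs_iteratedDeriv_rpow_le_of_eq_one {S : Set ℝ} (hS : IsOpen S) {k n : ℕ} (hk : k ≤ n)
    {g : ℝ → ℝ} (hg : ContDiffOn ℝ k g S) (hpos : ∀ u ∈ S, 0 < g u) (p : ℝ) {s : ℝ}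
    (hs : s ∈ S) (hgs : g s = 1) {D : ℝ} (hD : ∀ i, 1 ≤ i → i ≤ k → |iteratedDeriv i g s| ≤ D ^ i) :
    |iteratedDeriv k (fun u ↦ g u ^ p) s| ≤
      k ! * (∑ i ∈ Finset.range (n + 1), |(descPochhammer ℝ i).eval p|) * D ^ k := by
  have hrpow : ∀ i ≤ k, ‖iteratedFDerivWithin ℝ i (fun x : ℝ ↦ x ^ p) (Ioi 0) (g s)‖ ≤
      ∑ i ∈ Finset.range (n + 1), |(descPochhammer ℝ i).eval p| := by
    intro i hi
    rw [hgs, norm_iteratedFDerivWithin_eq_norm_iteratedDeriv isOpen_Ioi i (mem_Ioi.mpr one_pos),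
      iteratedDeriv_eq_iterate, Real.iter_deriv_rpow_const, Real.one_rpow, mul_one]
    exact Finset.single_le_sum (f := fun i ↦ |(descPochhammer ℝ i).eval p|)
      (fun _ _ ↦ abs_nonneg _) (Finset.mem_range_succ_iff.mpr (hi.trans hk))
  have faaDiBruno := norm_iteratedFDerivWithin_comp_le (N := k) (D := D)
    (contDiffOn_id.rpow_const_of_ne fun x hx ↦ (mem_Ioi.mp hx).ne') hg le_rfl
    isOpen_Ioi.uniqueDiffOn hS.uniqueDiffOn hpos hs hrpow fun i hi hik ↦
      (norm_iteratedFDerivWithin_eq_norm_iteratedDeriv hS i hs).trans_le (hD i hi hik)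
  rwa [norm_iteratedFDerivWithin_eq_norm_iteratedDeriv hS k hs] at faaDiBruno

lemma exists_isSymbolOn_rpow (n : ℕ) (p K : ℝ) :
    ∃ K' : ℝ, 0 < K' ∧ ∀ {S : Set ℝ} {δ f : ℝ → ℝ}, IsOpen S → (∀ s ∈ S, 0 < δ s) →
      (∀ s ∈ S, 0 < f s) → IsSymbolOn n S δ (fun s ↦ K * f s) f →
        IsSymbolOn n S δ (fun s ↦ K' * f s ^ p) (fun s ↦ f s ^ p) := by
  set B : ℝ := ∑ i ∈ Finset.range (n + 1), |(descPochhammer ℝ i).eval p|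
  have hB : 0 < B := Finset.sum_pos' (fun _ _ ↦ abs_nonneg _) ⟨0, by simp⟩
  refine ⟨n ! * B * max K 1 ^ n, by positivity, fun {S δ f} hS hδ hf hsymb ↦
    ⟨hsymb.contDiffOn.rpow_const_of_ne fun s hs ↦ (hf s hs).ne', fun k hk s hs ↦ ?_⟩⟩
  have hδs := hδ s hs
  have hfs := hf s hs
  -- Dividing `f` by its value at `s` makes the constant independent of the size of `f`.
  set g : ℝ → ℝ := fun u ↦ (f s)⁻¹ * f u with hg
  have hg_pos : ∀ u ∈ S, 0 < g u := fun u hu ↦ mul_pos (inv_pos.mpr hfs) (hf u hu)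
  have hg_deriv : ∀ i, 1 ≤ i → i ≤ k → |iteratedDeriv i g s| ≤ (max K 1 / δ s) ^ i := by
    intro i hi hik
    have hbound := hsymb.norm_iteratedDeriv_mul_pow_le i (hik.trans hk) s hs
    rw [hg, iteratedDeriv_const_mul_field, abs_mul, abs_inv, abs_of_pos hfs, div_pow,
      le_div_iff₀ (by positivity), mul_assoc, inv_mul_le_iff₀ hfs]
    calc |iteratedDeriv i f s| * δ s ^ i ≤ K * f s := hbound
      _ ≤ f s * max K 1 := by rw [mul_comm]; gcongr; exact le_max_left _ _
      _ ≤ f s * max K 1 ^ i := by gcongr; exact le_self_pow₀ (le_max_right _ _) (by lia)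
  have hg_rpow := abs_iteratedDeriv_rpow_le_of_eq_one hS hk
    (contDiffOn_const.mul (hsymb.contDiffOn.of_le (Nat.cast_le.mpr hk))) hg_pos p hs
    (inv_mul_cancel₀ hfs.ne') hg_deriv
  have hf_eq : EqOn (fun u ↦ f u ^ p) (fun u ↦ f s ^ p * g u ^ p) S := fun u hu ↦ by
    beta_reduce
    rw [← Real.mul_rpow hfs.le (hg_pos u hu).le, mul_inv_cancel_left₀ hfs.ne']
  have hfp : 0 < f s ^ p := Real.rpow_pos_of_pos hfs p
  calc ‖iteratedDeriv k (fun u ↦ f u ^ p) s‖ * δ s ^ k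
      = f s ^ p * |iteratedDeriv k (fun u ↦ g u ^ p) s| * δ s ^ k := by
        rw [hf_eq.iteratedDeriv_of_isOpen hS k hs, iteratedDeriv_const_mul_field, norm_mul,
          Real.norm_of_nonneg hfp.le, Real.norm_eq_abs]
    _ ≤ f s ^ p * (k ! * B * (max K 1 / δ s) ^ k) * δ s ^ k := by gcongr
    _ = k ! * B * max K 1 ^ k * f s ^ p := by rw [div_pow]; field_simp
    _ ≤ n ! * B * max K 1 ^ n * f s ^ p := by
        gcongr
        exact le_max_right _ _

lemma abs_iteratedDeriv_cosh_le (k : ℕ) (x : ℝ) : |iteratedDeriv k Real.cosh x| ≤ Real.cosh x := by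
  obtain ⟨m, rfl | rfl⟩ := Nat.even_or_odd' k
  · rw [Real.iteratedDeriv_even_cosh, abs_of_pos (Real.cosh_pos x)]
  · rw [Real.iteratedDeriv_odd_cosh, Real.abs_sinh, ← Real.cosh_abs]
    exact (Real.sinh_lt_cosh _).le

lemma abs_sinh_le_abs_mul_cosh (x : ℝ) : |Real.sinh x| ≤ |x| * Real.cosh x := by
  have hderiv : ∀ y ∈ Metric.closedBall (0 : ℝ) |x|, ‖deriv Real.sinh y‖ ≤ Real.cosh x := by
    intro y hy
    rw [Real.deriv_sinh, Real.norm_of_nonneg (Real.cosh_pos y).le, Real.cosh_le_cosh]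
    simpa using hy
  simpa [mul_comm] using (convex_closedBall (0 : ℝ) |x|).norm_image_sub_le_of_norm_deriv_le
    (fun y _ ↦ Real.differentiable_sinh y) hderiv (by simp : (0 : ℝ) ∈ _) (by simp : x ∈ _)

lemma cosh_sub_cosh (x y : ℝ) :
    Real.cosh x - Real.cosh y = 2 * Real.sinh ((x + y) / 2) * Real.sinh ((x - y) / 2) := by
  have hx := Real.cosh_add ((x + y) / 2) ((x - y) / 2)
  have hy := Real.cosh_sub ((x + y) / 2) ((x - y) / 2)
  ring_nf at hx hy ⊢
  rw [hx, hy]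
  ring

lemma sq_sub_sq_div_two_le_cosh_sub_cosh {x y : ℝ} (h : |y| ≤ x) :
    (x ^ 2 - y ^ 2) / 2 ≤ Real.cosh x - Real.cosh y := by
  obtain ⟨hneg, hpos⟩ := abs_le.mp h
  calc (x ^ 2 - y ^ 2) / 2 = 2 * ((x + y) / 2) * ((x - y) / 2) := by ring
    _ ≤ 2 * Real.sinh ((x + y) / 2) * Real.sinh ((x - y) / 2) := by
        have hsub : 0 ≤ (x - y) / 2 := by linarith
        have hadd : 0 ≤ (x + y) / 2 := by linarith
        have : 0 ≤ Real.sinh ((x + y) / 2) := Real.sinh_nonneg_iff.mpr hadd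
        gcongr
        · exact Real.self_le_sinh_iff.mpr hadd
        · exact Real.self_le_sinh_iff.mpr hsub
    _ = Real.cosh x - Real.cosh y := (cosh_sub_cosh x y).symm

lemma abs_iteratedDeriv_cosh_mul_sub_abs_pow_le {t x : ℝ} (hx : |x| ≤ t) {k : ℕ} (hk : k ≠ 0) :
    |iteratedDeriv k Real.cosh x| * (t - |x|) ^ k ≤
      Real.cosh t * (1 + t) ^ k * (t * (t - |x|)) := by
  have ht0 : 0 ≤ t := (abs_nonneg x).trans hx
  have : 0 ≤ t - |x| := sub_nonneg.mpr hx
  have hcosh : Real.cosh x ≤ Real.cosh t := Real.cosh_le_cosh.mpr (hx.trans (le_abs_self t))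
  rcases eq_or_ne k 1 with rfl | hk1
  · rw [iteratedDeriv_one, Real.deriv_cosh, pow_one, pow_one]
    calc |Real.sinh x| * (t - |x|) ≤ |x| * Real.cosh x * (t - |x|) := by
          gcongr
          exact abs_sinh_le_abs_mul_cosh x
      _ ≤ t * Real.cosh t * (t - |x|) := by gcongr
      _ = Real.cosh t * 1 * (t * (t - |x|)) := by ring
      _ ≤ Real.cosh t * (1 + t) * (t * (t - |x|)) := by gcongr; linarith
  · obtain ⟨m, rfl⟩ : ∃ m, k = m + 2 := ⟨k - 2, by lia⟩
    have hd_le : t - |x| ≤ t := sub_le_self t (abs_nonneg x)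
    calc |iteratedDeriv (m + 2) Real.cosh x| * (t - |x|) ^ (m + 2)
        ≤ Real.cosh t * (t - |x|) ^ (m + 2) := by
          gcongr
          exact (abs_iteratedDeriv_cosh_le _ _).trans hcosh
      _ = Real.cosh t * (t - |x|) ^ m * ((t - |x|) * (t - |x|)) := by ring
      _ ≤ Real.cosh t * (1 + t) ^ m * (t * (t - |x|)) := by gcongr; linarith
      _ ≤ Real.cosh t * (1 + t) ^ (m + 2) * (t * (t - |x|)) := by gcongr <;> linarith

section CoshWeight

variable {t s : ℝ}

lemma abs_two_mul_le_iff_abs_le_half : |2 * s| ≤ t ↔ |s| ≤ t / 2 := by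
  rw [abs_mul, abs_two, le_div_iff₀' two_pos]

lemma mul_half_sub_abs_le_cosh_sub_cosh_two_mul (hs : |s| ≤ t / 2) :
    t * (t / 2 - |s|) ≤ Real.cosh t - Real.cosh (2 * s) := by
  have hsum : t ≤ 2 * (t / 2 + |s|) := by linarith [abs_nonneg s]
  calc t * (t / 2 - |s|) ≤ 2 * (t / 2 + |s|) * (t / 2 - |s|) :=
        mul_le_mul_of_nonneg_right hsum (sub_nonneg.mpr hs)
    _ = (t ^ 2 - (2 * s) ^ 2) / 2 := by rw [mul_pow, ← sq_abs s]; ring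
    _ ≤ Real.cosh t - Real.cosh (2 * s) :=
        sq_sub_sq_div_two_le_cosh_sub_cosh (abs_two_mul_le_iff_abs_le_half.mpr hs)

lemma cosh_sub_cosh_two_mul_pos (hs : |s| < t / 2) : 0 < Real.cosh t - Real.cosh (2 * s) :=
  (mul_pos (by linarith [abs_nonneg s]) (sub_pos.mpr hs)).trans_le
    (mul_half_sub_abs_le_cosh_sub_cosh_two_mul hs.le)

lemma abs_iteratedDeriv_cosh_sub_cosh_two_mul (t s : ℝ) {k : ℕ} (hk : k ≠ 0) :
    |iteratedDeriv k (fun s ↦ Real.cosh t - Real.cosh (2 * s)) s| =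
      2 ^ k * |iteratedDeriv k Real.cosh (2 * s)| := by
  rw [iteratedDeriv_const_sub (Nat.pos_of_ne_zero hk), iteratedDeriv_neg,
    iteratedDeriv_comp_const_mul Real.contDiff_cosh, abs_neg, abs_mul, abs_pow, abs_two]

lemma abs_iteratedDeriv_cosh_sub_cosh_two_mul_mul_pow_le (hs : |s| ≤ t / 2) (k : ℕ) :
    |iteratedDeriv k (fun s ↦ Real.cosh t - Real.cosh (2 * s)) s| * (t / 2 - |s|) ^ k ≤
      2 * Real.cosh t * (1 + t) ^ k * (Real.cosh t - Real.cosh (2 * s)) := by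
  have ht0 : 0 ≤ t := by linarith [abs_nonneg s]
  have hlower := mul_half_sub_abs_le_cosh_sub_cosh_two_mul hs
  have hw0 : 0 ≤ Real.cosh t - Real.cosh (2 * s) :=
    le_trans (mul_nonneg ht0 (sub_nonneg.mpr hs)) hlower
  have h2s : t - |2 * s| = 2 * (t / 2 - |s|) := by rw [abs_mul, abs_two]; ring
  rcases eq_or_ne k 0 with rfl | hk
  · rw [iteratedDeriv_zero, abs_of_nonneg hw0, pow_zero, pow_zero, mul_one, mul_one]
    exact le_mul_of_one_le_left hw0 (by linarith [Real.one_le_cosh t])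
  · calc |iteratedDeriv k (fun s ↦ Real.cosh t - Real.cosh (2 * s)) s| * (t / 2 - |s|) ^ k
        = |iteratedDeriv k Real.cosh (2 * s)| * (t - |2 * s|) ^ k := by
          rw [abs_iteratedDeriv_cosh_sub_cosh_two_mul t s hk, h2s, mul_pow]; ring
      _ ≤ Real.cosh t * (1 + t) ^ k * (t * (t - |2 * s|)) :=
          abs_iteratedDeriv_cosh_mul_sub_abs_pow_le (abs_two_mul_le_iff_abs_le_half.mpr hs) hk
      _ = 2 * Real.cosh t * (1 + t) ^ k * (t * (t / 2 - |s|)) := by rw [h2s]; ring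
      _ ≤ 2 * Real.cosh t * (1 + t) ^ k * (Real.cosh t - Real.cosh (2 * s)) := by gcongr

lemma isSymbolOn_cosh_sub_cosh_two_mul (n : ℕ) {T : ℝ} (htT : t ≤ T) :
    IsSymbolOn n (Ioo (-(t / 2)) (t / 2)) (fun s ↦ t / 2 - |s|)
      (fun s ↦ 2 * Real.cosh T * (1 + T) ^ n * (Real.cosh t - Real.cosh (2 * s)))
      (fun s ↦ Real.cosh t - Real.cosh (2 * s)) := by
  refine ⟨(contDiff_const.sub (Real.contDiff_cosh.comp (by fun_prop))).contDiffOn,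
    fun k hk s hs ↦ ?_⟩
  have hst : |s| < t / 2 := abs_lt.mpr hs
  have ht0 : 0 ≤ t := by linarith [abs_nonneg s]
  have hw0 := (cosh_sub_cosh_two_mul_pos hst).le
  calc |iteratedDeriv k (fun s ↦ Real.cosh t - Real.cosh (2 * s)) s| * (t / 2 - |s|) ^ k
      ≤ 2 * Real.cosh t * (1 + t) ^ k * (Real.cosh t - Real.cosh (2 * s)) :=
        abs_iteratedDeriv_cosh_sub_cosh_two_mul_mul_pow_le hst.le k
    _ ≤ 2 * Real.cosh T * (1 + T) ^ k * (Real.cosh t - Real.cosh (2 * s)) := by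
        gcongr
        exact Real.cosh_le_cosh.mpr (abs_le_abs_of_nonneg ht0 htT)
    _ ≤ 2 * Real.cosh T * (1 + T) ^ n * (Real.cosh t - Real.cosh (2 * s)) := by
        gcongr
        linarith

end CoshWeight

section ArcsineDensity

variable {r : ℝ}

lemma hasDerivAt_arcsin_div {s : ℝ} (hs : s ∈ Ioo (-r) r) :
    HasDerivAt (fun s ↦ Real.arcsin (s / r)) (√(r ^ 2 - s ^ 2))⁻¹ s := by
  have hr : 0 < r := by linarith [hs.1, hs.2]
  have hlt : s / r < 1 := (div_lt_one hr).mpr hs.2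
  have hgt : -1 < s / r := (lt_div_iff₀ hr).mpr (by linarith [hs.1])
  refine ((Real.hasDerivAt_arcsin hgt.ne' hlt.ne).comp s
    ((hasDerivAt_id s).div_const r)).congr_deriv ?_
  have hsqrt : √(r ^ 2 - s ^ 2) = √(1 - (s / r) ^ 2) * r := by
    rw [← Real.sqrt_sq hr.le, ← Real.sqrt_mul' _ (sq_nonneg r), Real.sqrt_sq hr.le]
    congr 1
    field_simp
  rw [hsqrt, mul_inv, one_div, one_div]

lemma intervalIntegrable_inv_sqrt_sq_sub_sq (hr : 0 < r) :
    IntervalIntegrable (fun s ↦ (√(r ^ 2 - s ^ 2))⁻¹) volume (-r) r :=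
  intervalIntegral.intervalIntegrable_deriv_of_nonneg (by fun_prop)
    (fun s hs ↦ hasDerivAt_arcsin_div (by rwa [min_eq_left, max_eq_right] at hs <;> linarith))
    (fun s _ ↦ by positivity)

lemma integral_inv_sqrt_sq_sub_sq (hr : 0 < r) :
    ∫ s in (-r)..r, (√(r ^ 2 - s ^ 2))⁻¹ = Real.pi := by
  rw [intervalIntegral.integral_eq_sub_of_hasDerivAt_of_le (by linarith)
    (by fun_prop) (fun s hs ↦ hasDerivAt_arcsin_div hs) (intervalIntegrable_inv_sqrt_sq_sub_sq hr),
    neg_div, div_self hr.ne', Real.arcsin_one, Real.arcsin_neg_one]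
  ring

lemma tendsto_sub_abs_mul_inv_sqrt_sq_sub_sq (hr : 0 < r) {x : ℝ} (hx : |x| = r) :
    Tendsto (fun s ↦ (r - |s|) * (√(r ^ 2 - s ^ 2))⁻¹) (𝓝 x) (𝓝 0) := by
  have hfactor : ∀ s, (r - |s|) * (√(r ^ 2 - s ^ 2))⁻¹ = √(r - |s|) / √(r + |s|) := by
    intro s
    rw [← sq_abs s, sq_sub_sq, mul_comm (r + |s|), Real.sqrt_mul' _ (by positivity), mul_inv,
      ← mul_assoc, ← div_eq_mul_inv, ← div_eq_mul_inv, Real.div_sqrt]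
  have hlim : ContinuousAt (fun s ↦ √(r - |s|) / √(r + |s|)) x :=
    ContinuousAt.div (by fun_prop) (by fun_prop) (Real.sqrt_ne_zero'.mpr (by positivity))
  simpa only [hfactor, hx, sub_self, Real.sqrt_zero, zero_div] using hlim.tendsto

end ArcsineDensity

lemma hasDerivAt_iteratedDeriv {S : Set ℝ} (hS : IsOpen S) {k : ℕ} {f : ℝ → E}
    (hf : ContDiffOn ℝ (k + 1) f S) {s : ℝ} (hs : s ∈ S) :
    HasDerivAt (iteratedDeriv k f) (iteratedDeriv (k + 1) f s) s := by
  have hdiff := hf.differentiableOn_iteratedDerivWithin (m := k) (mod_cast k.lt_succ_self)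
    hS.uniqueDiffOn
  rw [iteratedDeriv_succ]
  exact ((hdiff.congr (iteratedDerivWithin_of_isOpen hS).symm).differentiableAt
    (hS.mem_nhds hs)).hasDerivAt

section Oscillatory

variable {F : Type*} [NormedAddCommGroup F] [NormedSpace ℂ F] {a b : ℝ}

lemma norm_exp_ofReal_mul_I_mul (ω s : ℝ) : ‖Complex.exp (ω * Complex.I * s)‖ = 1 := by
  rw [mul_right_comm, ← Complex.ofReal_mul, Complex.norm_exp_ofReal_mul_I]

lemma norm_integral_exp_smul_deriv [CompleteSpace F] (ω : ℝ) {g g' : ℝ → F} (hab : a < b)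
    (hderiv : ∀ s ∈ Ioo a b, HasDerivAt g (g' s) s) (hg : IntervalIntegrable g volume a b)
    (hg' : IntervalIntegrable g' volume a b) (ha : Tendsto g (𝓝[>] a) (𝓝 0))
    (hb : Tendsto g (𝓝[<] b) (𝓝 0)) :
    ‖∫ s in a..b, Complex.exp (ω * Complex.I * s) • g' s‖ =
      |ω| * ‖∫ s in a..b, Complex.exp (ω * Complex.I * s) • g s‖ := by
  set e : ℝ → ℂ := fun s ↦ Complex.exp (ω * Complex.I * s) with he
  have he_cont : Continuous e := by fun_prop
  have he_deriv : ∀ s, HasDerivAt e (ω * Complex.I * e s) s := by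
    intro s
    have := ((hasDerivAt_id s).ofReal_comp.const_mul (ω * Complex.I)).cexp
    simpa [he, mul_comm] using this
  have hint : IntervalIntegrable (fun s ↦ e s • g' s) volume a b :=
    hg'.continuousOn_smul he_cont.continuousOn
  have hint' : IntervalIntegrable (fun s ↦ (ω * Complex.I) • (e s • g s)) volume a b :=
    (hg.continuousOn_smul he_cont.continuousOn).smul _
  have htendsto : ∀ {l x}, l ≤ 𝓝 x → Tendsto g l (𝓝 0) → Tendsto (fun s ↦ e s • g s) l (𝓝 0) := by
    intro l x hl hgl
    simpa using ((he_cont.tendsto x).mono_left hl).smul hgl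
  have hparts := intervalIntegral.integral_eq_sub_of_hasDerivAt_of_tendsto hab
    (fun s hs ↦ ((he_deriv s).smul (hderiv s hs)).congr_deriv
      (by rw [mul_smul])) (hint.add hint')
    (htendsto nhdsWithin_le_nhds ha) (htendsto nhdsWithin_le_nhds hb)
  rw [intervalIntegral.integral_add hint hint', intervalIntegral.integral_smul, sub_zero,
    add_eq_zero_iff_eq_neg] at hparts
  rw [hparts, norm_neg, norm_smul, norm_mul, Complex.norm_I, mul_one, Complex.norm_real,
    Real.norm_eq_abs]

lemma norm_integral_exp_smul_iteratedDeriv [CompleteSpace F] (ω : ℝ) {n : ℕ} {f : ℝ → F}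
    (hab : a < b) (hf : ContDiffOn ℝ n f (Ioo a b))
    (hint : ∀ k ≤ n, IntervalIntegrable (iteratedDeriv k f) volume a b)
    (ha : ∀ k < n, Tendsto (iteratedDeriv k f) (𝓝[>] a) (𝓝 0))
    (hb : ∀ k < n, Tendsto (iteratedDeriv k f) (𝓝[<] b) (𝓝 0)) :
    ‖∫ s in a..b, Complex.exp (ω * Complex.I * s) • iteratedDeriv n f s‖ =
      |ω| ^ n * ‖∫ s in a..b, Complex.exp (ω * Complex.I * s) • f s‖ := by
  induction n with
  | zero => simp only [iteratedDeriv_zero, pow_zero, one_mul]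
  | succ n ih =>
    rw [norm_integral_exp_smul_deriv ω hab
        (fun s hs ↦ hasDerivAt_iteratedDeriv isOpen_Ioo (mod_cast hf) hs)
        (hint n n.le_succ) (hint (n + 1) le_rfl) (ha n n.lt_succ_self) (hb n n.lt_succ_self),
      ih (hf.of_le (mod_cast n.le_succ)) (fun k hk ↦ hint k (by lia)) (fun k hk ↦ ha k (by lia))
        (fun k hk ↦ hb k (by lia)), pow_succ', mul_assoc]

end Oscillatory

namespace IsSymbolOn

variable {F : Type*} [NormedAddCommGroup F] {n : ℕ} {r A : ℝ} {f : ℝ → F}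

section

variable [NormedSpace ℝ F]

lemma norm_iteratedDeriv_le_of_arcsine
    (hf : IsSymbolOn n (Ioo (-r) r) (fun s ↦ r - |s|)
      (fun s ↦ A * ((r - |s|) ^ n * (√(r ^ 2 - s ^ 2))⁻¹)) f)
    {k : ℕ} (hk : k ≤ n) {s : ℝ} (hs : s ∈ Ioo (-r) r) :
    ‖iteratedDeriv k f s‖ ≤ A * ((r - |s|) ^ (n - k) * (√(r ^ 2 - s ^ 2))⁻¹) := by
  have hd : 0 < r - |s| := sub_pos.mpr (abs_lt.mpr hs)
  refine le_of_mul_le_mul_right ?_ (pow_pos hd k)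
  calc ‖iteratedDeriv k f s‖ * (r - |s|) ^ k
      ≤ A * ((r - |s|) ^ n * (√(r ^ 2 - s ^ 2))⁻¹) :=
        hf.norm_iteratedDeriv_mul_pow_le k hk s hs
    _ = A * ((r - |s|) ^ (n - k) * (√(r ^ 2 - s ^ 2))⁻¹) * (r - |s|) ^ k := by
        rw [← pow_sub_mul_pow (r - |s|) hk]; ring

lemma intervalIntegrable_iteratedDeriv_of_arcsine (hr : 0 < r)
    (hf : IsSymbolOn n (Ioo (-r) r) (fun s ↦ r - |s|)
      (fun s ↦ A * ((r - |s|) ^ n * (√(r ^ 2 - s ^ 2))⁻¹)) f)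
    {k : ℕ} (hk : k ≤ n) : IntervalIntegrable (iteratedDeriv k f) volume (-r) r := by
  have hbound : IntervalIntegrable (fun s ↦ A * ((r - |s|) ^ (n - k) * (√(r ^ 2 - s ^ 2))⁻¹))
      volume (-r) r :=
    ((intervalIntegrable_inv_sqrt_sq_sub_sq hr).continuousOn_mul (by fun_prop)).const_mul A
  rw [intervalIntegrable_iff_integrableOn_Ioo_of_le (by linarith)] at hbound ⊢
  refine hbound.mono' ?_ (ae_restrict_of_forall_mem measurableSet_Ioo fun s hs ↦
    hf.norm_iteratedDeriv_le_of_arcsine hk hs)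
  exact ((hf.contDiffOn.continuousOn_iteratedDerivWithin (mod_cast hk)
    isOpen_Ioo.uniqueDiffOn).congr (iteratedDerivWithin_of_isOpen isOpen_Ioo).symm
    ).aestronglyMeasurable measurableSet_Ioo

lemma tendsto_iteratedDeriv_of_arcsine (hr : 0 < r)
    (hf : IsSymbolOn n (Ioo (-r) r) (fun s ↦ r - |s|)
      (fun s ↦ A * ((r - |s|) ^ n * (√(r ^ 2 - s ^ 2))⁻¹)) f)
    {k : ℕ} (hk : k < n) {x : ℝ} (hx : |x| = r) :
    Tendsto (iteratedDeriv k f) (𝓝[Ioo (-r) r] x) (𝓝 0) := by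
  have hpow : Tendsto (fun s ↦ A * (r - |s|) ^ (n - k - 1)) (𝓝 x)
      (𝓝 (A * (r - |x|) ^ (n - k - 1))) := ContinuousAt.tendsto (by fun_prop)
  have hlim := (hpow.mul (tendsto_sub_abs_mul_inv_sqrt_sq_sub_sq hr hx)).mono_left
    (nhdsWithin_le_nhds (s := Ioo (-r) r))
  rw [mul_zero] at hlim
  refine squeeze_zero_norm' (eventually_mem_nhdsWithin.mono fun s hs ↦ ?_) hlim
  calc ‖iteratedDeriv k f s‖ ≤ A * ((r - |s|) ^ (n - k) * (√(r ^ 2 - s ^ 2))⁻¹) :=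
        hf.norm_iteratedDeriv_le_of_arcsine hk.le hs
    _ = A * (r - |s|) ^ (n - k - 1) * ((r - |s|) * (√(r ^ 2 - s ^ 2))⁻¹) := by
        rw [← pow_sub_one_mul (by lia : n - k ≠ 0)]; ring

end

lemma pow_mul_norm_integral_exp_smul_le [NormedSpace ℂ F] [CompleteSpace F] (hr : 0 < r)
    (hf : IsSymbolOn n (Ioo (-r) r) (fun s ↦ r - |s|)
      (fun s ↦ A * ((r - |s|) ^ n * (√(r ^ 2 - s ^ 2))⁻¹)) f) (ω : ℝ) :
    |ω| ^ n * ‖∫ s in (-r)..r, Complex.exp (ω * Complex.I * s) • f s‖ ≤ A * Real.pi := by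
  have hlt : -r < r := by linarith
  have hleft : ∀ k < n, Tendsto (iteratedDeriv k f) (𝓝[>] (-r)) (𝓝 0) := fun k hk ↦ by
    simpa only [nhdsWithin_Ioo_eq_nhdsGT hlt] using
      hf.tendsto_iteratedDeriv_of_arcsine hr hk (x := -r) (by rw [abs_neg, abs_of_pos hr])
  have hright : ∀ k < n, Tendsto (iteratedDeriv k f) (𝓝[<] r) (𝓝 0) := fun k hk ↦ by
    simpa only [nhdsWithin_Ioo_eq_nhdsLT hlt] using
      hf.tendsto_iteratedDeriv_of_arcsine hr hk (abs_of_pos hr)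
  rw [← norm_integral_exp_smul_iteratedDeriv ω hlt hf.contDiffOn
    (fun k hk ↦ hf.intervalIntegrable_iteratedDeriv_of_arcsine hr hk) hleft hright,
    ← integral_inv_sqrt_sq_sub_sq hr, ← intervalIntegral.integral_const_mul]
  refine intervalIntegral.norm_integral_le_of_norm_le hlt.le ?_
    ((intervalIntegrable_inv_sqrt_sq_sub_sq hr).const_mul A)
  filter_upwards [Ioo_ae_eq_Ioc.mem_iff] with s hs hsIoc
  rw [norm_smul, norm_exp_ofReal_mul_I_mul, one_mul]
  simpa using hf.norm_iteratedDeriv_le_of_arcsine le_rfl (hs.mpr hsIoc)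

end IsSymbolOn

lemma cosh_sub_cosh_two_mul_rpow_neg_half_le {t s : ℝ} (hs : |s| < t / 2) :
    (Real.cosh t - Real.cosh (2 * s)) ^ (-(1 / 2) : ℝ) ≤ (√((t / 2) ^ 2 - s ^ 2))⁻¹ := by
  have hsq : 0 < (t / 2) ^ 2 - s ^ 2 := sub_pos.mpr (sq_lt_sq' (abs_lt.mp hs).1 (abs_lt.mp hs).2)
  have hlower : (t / 2) ^ 2 - s ^ 2 ≤ Real.cosh t - Real.cosh (2 * s) :=
    calc (t / 2) ^ 2 - s ^ 2 ≤ (t ^ 2 - (2 * s) ^ 2) / 2 := by linarith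
      _ ≤ Real.cosh t - Real.cosh (2 * s) :=
        sq_sub_sq_div_two_le_cosh_sub_cosh (abs_two_mul_le_iff_abs_le_half.mpr hs.le)
  rw [Real.rpow_neg (hsq.le.trans hlower), ← Real.sqrt_eq_rpow]
  exact inv_anti₀ (Real.sqrt_pos.mpr hsq) (Real.sqrt_le_sqrt hlower)

lemma exists_isSymbolOn_cosh_rpow_neg_half_smul (n : ℕ) (T : ℝ) :
    ∃ K : ℝ, 0 < K ∧ ∀ t ∈ Ioc 0 T, ∀ (R : ℝ → E) (C : ℝ),
      IsSymbolOn n (Ioo (-(t / 2)) (t / 2)) (fun s ↦ t / 2 - |s|)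
        (fun s ↦ C * (t / 2 - |s|) ^ n) R →
      IsSymbolOn n (Ioo (-(t / 2)) (t / 2)) (fun s ↦ t / 2 - |s|)
        (fun s ↦ 2 ^ n * (K * C) * ((t / 2 - |s|) ^ n * (√((t / 2) ^ 2 - s ^ 2))⁻¹))
        (fun s ↦ (Real.cosh t - Real.cosh (2 * s)) ^ (-(1 / 2) : ℝ) • R s) := by
  obtain ⟨K, hK, hrpow⟩ := exists_isSymbolOn_rpow n (-(1 / 2)) (2 * Real.cosh T * (1 + T) ^ n)
  refine ⟨K, hK, fun t ht R C hR ↦ ?_⟩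
  have hdist : ∀ s ∈ Ioo (-(t / 2)) (t / 2), 0 < t / 2 - |s| := fun s hs ↦
    sub_pos.mpr (abs_lt.mpr hs)
  have hweight := hrpow isOpen_Ioo hdist (fun s hs ↦ cosh_sub_cosh_two_mul_pos (abs_lt.mpr hs))
    (isSymbolOn_cosh_sub_cosh_two_mul n ht.2)
  refine (hweight.smul isOpen_Ioo (fun s hs ↦ (hdist s hs).le) hR).mono fun s hs ↦ ?_
  have hR0 : 0 ≤ C * (t / 2 - |s|) ^ n :=
    le_trans (by simp) (hR.norm_iteratedDeriv_mul_pow_le 0 n.zero_le s hs)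
  calc 2 ^ n * (K * (Real.cosh t - Real.cosh (2 * s)) ^ (-(1 / 2) : ℝ) *
        (C * (t / 2 - |s|) ^ n))
      ≤ 2 ^ n * (K * (√((t / 2) ^ 2 - s ^ 2))⁻¹ * (C * (t / 2 - |s|) ^ n)) := by
        gcongr
        exact cosh_sub_cosh_two_mul_rpow_neg_half_le (abs_lt.mpr hs)
    _ = 2 ^ n * (K * C) * ((t / 2 - |s|) ^ n * (√((t / 2) ^ 2 - s ^ 2))⁻¹) := by ring

theorem stmt15_general {F : Type*} [NormedAddCommGroup F] [NormedSpace ℂ F] [CompleteSpace F]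
    (n : ℕ) (T : ℝ) : ∃ K : ℝ, 0 < K ∧
    ∀ t ∈ Ioc 0 T, ∀ (R : ℝ → F) (C : ℝ), ContDiffOn ℝ n R (Ioo (-(t / 2)) (t / 2)) →
      (∀ j ≤ n, ∀ s ∈ Ioo (-(t / 2)) (t / 2),
        ‖iteratedDeriv j R s‖ ≤ C * (t / 2 - |s|) ^ (n - j)) →
      ∀ lam : ℝ, lam ≠ 0 →
        ‖∫ s in (-(t / 2))..(t / 2), (Complex.exp (2 * Complex.I * (lam : ℂ) * (s : ℂ)) *
            (((Real.cosh t - Real.cosh (2 * s)) ^ (-(1 / 2) : ℝ) : ℝ) : ℂ)) • R s‖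
          ≤ K * C * |lam| ^ (-(n : ℝ)) := by
  obtain ⟨K, hK, hsymb⟩ := exists_isSymbolOn_cosh_rpow_neg_half_smul (E := F) n T
  refine ⟨K * Real.pi, by positivity, fun t ht R C hR hbound lam hlam ↦ ?_⟩
  have hR_symb : IsSymbolOn n (Ioo (-(t / 2)) (t / 2)) (fun s ↦ t / 2 - |s|)
      (fun s ↦ C * (t / 2 - |s|) ^ n) R := by
    refine ⟨hR, fun k hk s hs ↦ ?_⟩
    have hd : 0 ≤ t / 2 - |s| := (sub_pos.mpr (abs_lt.mpr hs)).le
    rw [← pow_sub_mul_pow _ hk, ← mul_assoc]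
    exact mul_le_mul_of_nonneg_right (hbound k hk s hs) (pow_nonneg hd k)
  have hphase : ∀ s : ℝ, (Complex.exp (2 * Complex.I * (lam : ℂ) * (s : ℂ)) *
      (((Real.cosh t - Real.cosh (2 * s)) ^ (-(1 / 2) : ℝ) : ℝ) : ℂ)) • R s =
      Complex.exp (((2 * lam : ℝ) : ℂ) * Complex.I * s) •
        ((Real.cosh t - Real.cosh (2 * s)) ^ (-(1 / 2) : ℝ) • R s) := by
    intro s
    rw [mul_smul, Complex.coe_smul]
    congr 2
    push_cast
    ring
  have hdecay := (hsymb t ht R C hR_symb).pow_mul_norm_integral_exp_smul_le (half_pos ht.1)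
    (2 * lam)
  rw [abs_mul, abs_two, mul_pow, mul_assoc, mul_assoc (2 ^ n) (K * C),
    mul_le_mul_iff_right₀ (by positivity)] at hdecay
  rw [Real.rpow_neg (abs_nonneg lam), Real.rpow_natCast, ← div_eq_mul_inv,
    le_div_iff₀' (by positivity), mul_right_comm K]
  simpa only [hphase] using hdecay

theorem stmt15 (C : ℝ) (hC : 0 < C) : ∃ C' : ℝ, 0 < C' ∧
    ∀ t ∈ Set.Ioc (0:ℝ) 1, ∀ R : ℝ → ℂ, ContDiff ℝ 3 R →
      (∀ j ≤ 3, ∀ s ∈ Set.Icc (-(t/2)) (t/2),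
        ‖iteratedDeriv j R s‖ ≤ C * (t/2 - |s|) ^ (3 - j)) →
      (∀ j ≤ 2, iteratedDeriv j R (t/2) = 0 ∧ iteratedDeriv j R (-(t/2)) = 0) →
      ∀ lam : ℝ, 1 ≤ lam →
        ‖∫ s in (-(t/2))..(t/2), Complex.exp (2*Complex.I*(lam:ℂ)*(s:ℂ)) *
            (((Real.cosh t - Real.cosh (2*s)) ^ (-(1/2):ℝ) : ℝ) : ℂ) * R s‖
          ≤ C' * lam ^ (-(3:ℝ)) := by
  obtain ⟨K, hK, hgeneral⟩ := stmt15_general (F := ℂ) 3 1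
  refine ⟨K * C, mul_pos hK hC, fun t ht R hR hbound _ lam hlam ↦ ?_⟩
  have hlam0 : 0 < lam := zero_lt_one.trans_le hlam
  simpa only [smul_eq_mul, abs_of_pos hlam0, Nat.cast_ofNat] using hgeneral t ht R C hR.contDiffOn
    (fun j hj s hs ↦ hbound j hj s (Set.Ioo_subset_Icc_self hs)) lam hlam0.ne'
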